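/- For any skew shape λ/μ, rank(λ/μ) = jrank(λ/μ), i.e., the rank of λ/μ equals the number of rows of the Jacobi–Trudi matrix JT_{λ/μ} that contain no entry equal to 1. -/

import Mathlib

/-! The boundary path of a partition `f` is recorded by the set of positions `f i − i − 1` of
its vertical steps; let `V` be this set for `μ`. A diagonal of content `k` that meets `λ/μ` is
an outside diagonal iff `k − 1 ∈ V` and `k ∉ V`, and an inside diagonal iff `k − 1 ∉ V` and
`k ∈ V` (`outside_iff`, `inside_iff`), so `d⁺ − d⁻` adds up `[k − 1 ∈ V] − [k ∈ V]` over the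
squares of `λ/μ`, `k` being the content of the square.

The squares of row `i` have the contents `μ_i − i ≤ k ≤ λ_i − i − 1`, hence the sum over a row
telescopes (`card_exits`) to `[μ_i − i − 1 ∈ V] − [λ_i − i − 1 ∈ V] = 1 − [λ_i − i − 1 ∈ V]`.
This is `1` if no `j` satisfies `λ_i − i = μ_j − j`, that is, if row `i` of the Jacobi–Trudi
matrix has no entry `h_0 = 1`, and `0` otherwise. Summing over the rows gives the result. -/

open Set Polynomial

namespace SkewBorder

noncomputable section

/-- A partition, as a weakly decreasing sequence of naturals that is eventually zero
(equivalently, has finite sum). -/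
def IsPartitionFn (f : ℕ → ℕ) : Prop :=
  (∀ i j, i ≤ j → f j ≤ f i) ∧ ∃ N, ∀ i, N ≤ i → f i = 0

/-- A skew shape `λ/μ`, given by a pair of partitions `μ ⊆ λ`. -/
structure SkewShape where
  lam : ℕ → ℕ
  mu : ℕ → ℕ
  lam_part : IsPartitionFn lam
  mu_part : IsPartitionFn mu
  mu_le : ∀ i, mu i ≤ lam i

/-- The Young diagram (set of squares) of a skew diagram determined by outer
function `f` and inner function `g`; square `(i,j)` (row `i`, column `j`,
`0`-based, rows increasing downwards) belongs to it iff `0 ≤ i` and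
`g i ≤ j < f i`. -/
def skewCells (f g : ℕ → ℕ) : Set (ℤ × ℤ) :=
  {p | 0 ≤ p.1 ∧ (g p.1.toNat : ℤ) ≤ p.2 ∧ p.2 < (f p.1.toNat : ℤ)}

/-- The squares of the skew shape `λ/μ`. -/
def SkewShape.cells (sh : SkewShape) : Set (ℤ × ℤ) := skewCells sh.lam sh.mu

/-- An outside top corner of `λ/μ`. -/
def OutsideCorner (sh : SkewShape) (p : ℤ × ℤ) : Prop :=
  p ∈ sh.cells ∧ (p.1 - 1, p.2) ∉ sh.cells ∧ (p.1, p.2 - 1) ∉ sh.cells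

/-- An inside top corner of `λ/μ`. -/
def InsideCorner (sh : SkewShape) (p : ℤ × ℤ) : Prop :=
  p ∈ sh.cells ∧ (p.1 - 1, p.2) ∈ sh.cells ∧ (p.1, p.2 - 1) ∈ sh.cells ∧
    (p.1 - 1, p.2 - 1) ∉ sh.cells

/-- `d⁺(λ/μ)`: the total number of outside diagonal squares. -/
def SkewShape.dplus (sh : SkewShape) : ℕ :=
  {p : ℤ × ℤ | p ∈ sh.cells ∧ ∃ q : ℤ × ℤ, OutsideCorner sh q ∧
    ∃ n : ℕ, p = (q.1 + n, q.2 + n)}.ncard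

/-- `d⁻(λ/μ)`: the total number of inside diagonal squares. -/
def SkewShape.dminus (sh : SkewShape) : ℕ :=
  {p : ℤ × ℤ | p ∈ sh.cells ∧ ∃ q : ℤ × ℤ, InsideCorner sh q ∧
    ∃ n : ℕ, p = (q.1 + n, q.2 + n)}.ncard

/-- The (Durfee/Frobenius) rank of a skew shape: `rank(λ/μ) = d⁺(λ/μ) − d⁻(λ/μ)`. -/
def SkewShape.rank (sh : SkewShape) : ℕ := sh.dplus - sh.dminus

/-- Two squares are adjacent if they share an edge. -/
def CellAdj (p q : ℤ × ℤ) : Prop :=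
  (p.1 = q.1 ∧ (p.2 = q.2 + 1 ∨ q.2 = p.2 + 1)) ∨
  (p.2 = q.2 ∧ (p.1 = q.1 + 1 ∨ q.1 = p.1 + 1))

/-- A set of squares is connected (equivalently, the interior of the corresponding
union of closed unit squares is a connected open set): it is nonempty and any two
of its squares are joined by a path of edge-adjacent squares inside the set. -/
def IsConnectedCellSet (B : Set (ℤ × ℤ)) : Prop :=
  B.Nonempty ∧ ∀ p ∈ B, ∀ q ∈ B,
    Relation.ReflTransGen (fun x y => y ∈ B ∧ CellAdj x y) p q

/-- A set of squares is a skew diagram if it is the diagram of some `λ/μ`. -/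
def IsSkewDiagram (B : Set (ℤ × ℤ)) : Prop :=
  ∃ f g : ℕ → ℕ, IsPartitionFn f ∧ IsPartitionFn g ∧ (∀ i, g i ≤ f i) ∧ B = skewCells f g

/-- A border strip: a nonempty connected skew shape with no `2 × 2` square. -/
def IsBorderStrip (B : Set (ℤ × ℤ)) : Prop :=
  IsSkewDiagram B ∧ IsConnectedCellSet B ∧
    ∀ p : ℤ × ℤ, ¬ (p ∈ B ∧ (p.1 + 1, p.2) ∈ B ∧ (p.1, p.2 + 1) ∈ B ∧ (p.1 + 1, p.2 + 1) ∈ B)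

/-- A border strip decomposition of `λ/μ`: a partition of its squares into
pairwise disjoint border strips. -/
def IsBSD (sh : SkewShape) (D : Set (Set (ℤ × ℤ))) : Prop :=
  (∀ B ∈ D, IsBorderStrip B) ∧ D.PairwiseDisjoint id ∧ ⋃₀ D = sh.cells

/-- A minimal border strip decomposition: one with the fewest possible strips. -/
def IsMinBSD (sh : SkewShape) (D : Set (Set (ℤ × ℤ))) : Prop :=
  IsBSD sh D ∧ ∀ D', IsBSD sh D' → D.ncard ≤ D'.ncard

/-- `mbsd(λ/μ)`: the number of minimal border strip decompositions. -/
noncomputable def mbsd (sh : SkewShape) : ℕ := {D : Set (Set (ℤ × ℤ)) | IsMinBSD sh D}.ncard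

/-- The step at diagonal position `k` of the boundary path of the partition `f`
(read from lower left to upper right) is vertical, i.e. the corresponding letter of
the Comét code of `f` is `0`.  (Vertical steps occur exactly at the positions
`f i − i − 1`, `i ≥ 0`.)  For a skew shape `λ/μ`, taking `f = λ` gives the lower
envelope (the top row `c` of `code(λ/μ)`) and `f = μ` gives the upper envelope
(the bottom row `d`). -/
def vertStep (f : ℕ → ℕ) (k : ℤ) : Prop := ∃ i : ℕ, k = (f i : ℤ) - i - 1

/-- The zigzag `{(i,j), (i−1,j), (i−1,j−1), (i−2,j−1), (i−2,j−2), …}` starting at a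
square `p = (i,j)`, used to define the snake of a horizontal lower-envelope edge. -/
def zigzagH (p : ℤ × ℤ) : Set (ℤ × ℤ) :=
  {q | ∃ t : ℕ, q = (p.1 - (((t + 1) / 2 : ℕ) : ℤ), p.2 - ((t / 2 : ℕ) : ℤ))}

/-- The zigzag `{(i,j), (i,j−1), (i−1,j−1), (i−1,j−2), (i−2,j−2), …}` starting at a
square `p = (i,j)`, used to define the snake of a vertical lower-envelope edge. -/
def zigzagV (p : ℤ × ℤ) : Set (ℤ × ℤ) :=
  {q | ∃ t : ℕ, q = (p.1 - ((t / 2 : ℕ) : ℤ), p.2 - (((t + 1) / 2 : ℕ) : ℤ))}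

/-- The diagram of the outer partition `λ` alone. -/
def lamCells (sh : SkewShape) : Set (ℤ × ℤ) := skewCells sh.lam (fun _ => 0)

/-- The snake `S_e` of the edge `e` of the lower envelope of `λ/μ` at diagonal
position `k`.  If `e` is vertical it is the right-hand edge of the square
`(i, λ_i − 1)` where `k = λ_i − i − 1`, and `S_e = (λ/μ) ∩ zigzagV` from that square;
if `e` is horizontal it is the lower edge of the lowest square of `λ` on the
diagonal `j − i = k + 1`, and `S_e = (λ/μ) ∩ zigzagH` from that square.
(If no such square of `λ/μ` exists, i.e. `e` also lies on the upper envelope, the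
intersection is empty, in accordance with `S_e = ∅`.) -/
def snake (sh : SkewShape) (k : ℤ) : Set (ℤ × ℤ) :=
  {q | q ∈ sh.cells ∧
    ((vertStep sh.lam k ∧ ∃ i : ℕ, k = (sh.lam i : ℤ) - i - 1 ∧
        q ∈ zigzagV ((i : ℤ), (sh.lam i : ℤ) - 1)) ∨
     (¬ vertStep sh.lam k ∧ ∃ p : ℤ × ℤ, p ∈ lamCells sh ∧ p.2 - p.1 = k + 1 ∧
        (p.1 + 1, p.2 + 1) ∉ lamCells sh ∧ q ∈ zigzagH p))}

/-- The snake at position `k` is a left snake: it comes from a vertical edge and has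
even length (= odd number of squares); its symbol in the snake sequence is `L_m`
with `m = (snake sh k).ncard / 2`. -/
def IsLeftSnakePos (sh : SkewShape) (k : ℤ) : Prop :=
  vertStep sh.lam k ∧ Odd (snake sh k).ncard

/-- The snake at position `k` is a right snake: it comes from a horizontal edge and
has even length (= odd number of squares); its symbol in the snake sequence is `R_m`
with `m = (snake sh k).ncard / 2`. -/
def IsRightSnakePos (sh : SkewShape) (k : ℤ) : Prop :=
  ¬ vertStep sh.lam k ∧ Odd (snake sh k).ncard

/-- An interval set of `λ/μ`: a set of `rank(λ/μ)` pairs `(u,v)` with `u < v`,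
all coordinates distinct, `q_u` a left-snake symbol `L_s` and `q_v` a right-snake
symbol `R_t` in the snake sequence. -/
def IsIntervalSet (sh : SkewShape) (I : Finset (ℤ × ℤ)) : Prop :=
  I.card = sh.rank ∧
  (∀ p ∈ I, p.1 < p.2 ∧ IsLeftSnakePos sh p.1 ∧ IsRightSnakePos sh p.2) ∧
  (∀ p ∈ I, ∀ q ∈ I, p ≠ q → p.1 ≠ q.1 ∧ p.1 ≠ q.2 ∧ p.2 ≠ q.1 ∧ p.2 ≠ q.2)

/-- `is(λ/μ)`: the number of interval sets of `λ/μ`. -/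
noncomputable def isNum (sh : SkewShape) : ℕ :=
  {I : Finset (ℤ × ℤ) | IsIntervalSet sh I}.ncard

/-- `L` is a link of the snake `S`: a pair of consecutive (edge-adjacent) squares of `S`. -/
def IsLinkOf (L S : Set (ℤ × ℤ)) : Prop :=
  ∃ p q : ℤ × ℤ, p ∈ S ∧ q ∈ S ∧ CellAdj p q ∧ L = {p, q}

/-- `L` is a link of some snake of `λ/μ`. -/
def IsLink (sh : SkewShape) (L : Set (ℤ × ℤ)) : Prop := ∃ k : ℤ, IsLinkOf L (snake sh k)

/-- Two links are consecutive if they are distinct and have a square in common. -/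
def ConsecutiveLinks (L1 L2 : Set (ℤ × ℤ)) : Prop := L1 ≠ L2 ∧ (L1 ∩ L2).Nonempty

/-- A border strip decomposition uses a link if some of its strips contains both
squares of the link. -/
def DecompUses (D : Set (Set (ℤ × ℤ))) (L : Set (ℤ × ℤ)) : Prop := ∃ B ∈ D, L ⊆ B

/-- A border strip tableau of shape `λ/μ` with `m` strips: a chain of partitions
`μ = c 0 ⊆ c 1 ⊆ ⋯ ⊆ c m = λ` each of whose successive quotients is a border strip. -/
def IsBSTableau (sh : SkewShape) (m : ℕ) (c : ℕ → ℕ → ℕ) : Prop :=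
  c 0 = sh.mu ∧ c m = sh.lam ∧ (∀ s, s ≤ m → IsPartitionFn (c s)) ∧
  ∀ s, s < m → (∀ i, c s i ≤ c (s + 1) i) ∧ IsBorderStrip (skewCells (c (s + 1)) (c s))

/-- The `s`-th border strip `c (s+1) / c s` of a tableau. -/
def tabStrip (c : ℕ → ℕ → ℕ) (s : ℕ) : Set (ℤ × ℤ) := skewCells (c (s + 1)) (c s)

/-- The border strip decomposition corresponding to a border strip tableau. -/
def tabDecomp (m : ℕ) (c : ℕ → ℕ → ℕ) : Set (Set (ℤ × ℤ)) :=
  {B | ∃ s, s < m ∧ B = tabStrip c s}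

/-- A border strip tableau, normalized so that the chain is constant from `m` on
(so that each abstract tableau is represented by exactly one pair `(m, c)`). -/
def IsNormalizedTab (sh : SkewShape) (m : ℕ) (c : ℕ → ℕ → ℕ) : Prop :=
  IsBSTableau sh m c ∧ ∀ s, m ≤ s → c s = sh.lam

/-- `mbst(λ/μ)`: the number of minimal border strip tableaux of shape `λ/μ`
(those whose corresponding decomposition is minimal). -/
noncomputable def mbst (sh : SkewShape) : ℕ :=
  {tc : ℕ × (ℕ → ℕ → ℕ) | IsNormalizedTab sh tc.1 tc.2 ∧
    IsMinBSD sh (tabDecomp tc.1 tc.2)}.ncard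

/-- The tableau `(m, c)` corresponds to the interval set `I`: in terms of the code,
the strip added from `c s` to `c (s+1)` replaces the vertical step at position `u`
by the one at position `v`, for some pair `(u,v) ∈ I`. -/
def TabCorresponds (sh : SkewShape) (m : ℕ) (c : ℕ → ℕ → ℕ) (I : Finset (ℤ × ℤ)) : Prop :=
  ∀ s, s < m → ∀ u v : ℤ,
    (vertStep (c s) u ∧ ¬ vertStep (c (s + 1)) u ∧
      vertStep (c (s + 1)) v ∧ ¬ vertStep (c s) v) →
    (u, v) ∈ I

/-- `ht(B)`: one less than the number of rows of a border strip. -/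
noncomputable def stripHt (B : Set (ℤ × ℤ)) : ℕ := {i : ℤ | ∃ j : ℤ, (i, j) ∈ B}.ncard - 1

/-- `ht(T)`: the sum of the heights of the strips of a tableau. -/
noncomputable def htTab (m : ℕ) (c : ℕ → ℕ → ℕ) : ℕ :=
  ∑ s ∈ Finset.range m, stripHt (tabStrip c s)

/-- The type of an interval set: the multiset of the numbers `v − u`. -/
def intervalSetType (I : Finset (ℤ × ℤ)) : Multiset ℕ :=
  I.val.map fun p => (p.2 - p.1).toNat

/-- The decomposition `D` has type `σ`: for every `n`, the multiplicity of `n` in `σ`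
is the number of strips of `D` of size `n`. -/
def DecompHasType (D : Set (Set (ℤ × ℤ))) (σ : Multiset ℕ) : Prop :=
  ∀ n : ℕ, Multiset.count n σ = {B ∈ D | B.ncard = n}.ncard

/-- `is_σ(λ/μ)`: the number of interval sets of type `σ`. -/
noncomputable def isTyped (sh : SkewShape) (σ : Multiset ℕ) : ℕ :=
  {I : Finset (ℤ × ℤ) | IsIntervalSet sh I ∧ intervalSetType I = σ}.ncard

/-- `mbsd_σ(λ/μ)`: the number of minimal border strip decompositions of type `σ`. -/
noncomputable def mbsdTyped (sh : SkewShape) (σ : Multiset ℕ) : ℕ :=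
  {D : Set (Set (ℤ × ℤ)) | IsMinBSD sh D ∧ DecompHasType D σ}.ncard

/-- `c(I)`: the number of crossings `u_i < u_j < v_i < v_j` of an interval set. -/
def crossings (I : Finset (ℤ × ℤ)) : ℕ :=
  ((I ×ˢ I).filter fun q => q.1.1 < q.2.1 ∧ q.2.1 < q.1.2 ∧ q.1.2 < q.2.2).card

/-- `I` has no crossings. -/
def Noncrossing (I : Finset (ℤ × ℤ)) : Prop :=
  ∀ p ∈ I, ∀ q ∈ I, ¬ (p.1 < q.1 ∧ q.1 < p.2 ∧ p.2 < q.2)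

/-- `z(λ/μ) = z(1) + ⋯ + z(r)` computed from the crossing-free interval set `P`:
`z(i) = #{j : u_i < j < v_i, c_j = 0}`. -/
noncomputable def zval (sh : SkewShape) (P : Finset (ℤ × ℤ)) : ℕ :=
  ∑ p ∈ P, {j : ℤ | p.1 < j ∧ j < p.2 ∧ vertStep sh.lam j}.ncard

/-- The tableau has type `ν` (a list of strip sizes, in order). -/
def TabHasType (c : ℕ → ℕ → ℕ) (ν : List ℕ) : Prop :=
  ∀ s, s < ν.length → (tabStrip c s).ncard = ν.getD s 0

/-- `χ^{λ/μ}(ν) = Σ_T (−1)^{ht(T)}`, summed over all border strip tableaux of shape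
`λ/μ` and type `ν` (the Murnaghan–Nakayama rule). -/
noncomputable def chi (sh : SkewShape) (ν : List ℕ) : ℤ :=
  ∑ᶠ c ∈ {c : ℕ → ℕ → ℕ | IsNormalizedTab sh ν.length c ∧ TabHasType c ν},
    (-1 : ℤ) ^ htTab ν.length c

/-- `h_a(1^t)` as a polynomial in `t`: the binomial coefficient
`C(t + a − 1, a) = t(t+1)⋯(t+a−1)/a!`, and `0` for `a < 0`. -/
noncomputable def hPoly (a : ℤ) : Polynomial ℚ :=
  if a < 0 then 0
  else Polynomial.C ((a.toNat.factorial : ℚ))⁻¹ *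
    ∏ s ∈ Finset.range a.toNat, (Polynomial.X + Polynomial.C (s : ℚ))

/-- The principal specialization `s_{λ/μ}(1^t)` as a polynomial in `t`, via the
Jacobi–Trudi identity: `det ( C(t + λ_i − μ_j − i + j − 1, λ_i − μ_j − i + j) )`. -/
noncomputable def jtPoly (sh : SkewShape) (n : ℕ) : Polynomial ℚ :=
  (Matrix.of fun i j : Fin n =>
    hPoly ((sh.lam i : ℤ) - (sh.mu j : ℤ) - ((i : ℕ) : ℤ) + ((j : ℕ) : ℤ))).det

/-! ### Corner diagonals and the boundary code of `μ` -/

/-- A diagonal of content `k = j − i` that meets `λ/μ` is an outside diagonal exactly when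
the path of `μ` turns from a vertical step (position `k − 1`) to a horizontal one
(position `k`). -/
lemma outside_iff (sh : SkewShape) (p : ℤ × ℤ) (hp : p ∈ sh.cells) :
    (∃ q : ℤ × ℤ, OutsideCorner sh q ∧ ∃ n : ℕ, p = (q.1 + n, q.2 + n)) ↔
      vertStep sh.mu (p.2 - p.1 - 1) ∧ ¬ vertStep sh.mu (p.2 - p.1) := by
  have hl := sh.lam_part.1
  have hm := sh.mu_part.1
  constructor
  · rintro ⟨⟨i, j⟩, ⟨h1, h2, h3⟩, n, rfl⟩
    simp only [SkewShape.cells, skewCells, Set.mem_ofPred_eq] at h1 h2 h3 ⊢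
    obtain ⟨hi, h1a, h1b⟩ := h1
    lift i to ℕ using hi
    simp only [Int.toNat_natCast] at *
    have hj : j = sh.mu i := by omega
    refine ⟨⟨i, by omega⟩, ?_⟩
    rintro ⟨m, hmeq⟩
    rcases Nat.lt_or_ge m i with h | h
    · obtain ⟨i', rfl⟩ : ∃ i', i = i' + 1 := ⟨i - 1, by omega⟩
      have e : ((i' + 1 : ℕ) : ℤ) - 1 = (i' : ℕ) := by push_cast; ring
      rw [e, Int.toNat_natCast] at h2
      have := hl i' (i' + 1) (by omega)
      have := hm m i' (by omega)
      omega
    · have := hm i m h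
      omega
  · obtain ⟨r, c⟩ := p
    simp only [SkewShape.cells, skewCells, Set.mem_ofPred_eq] at hp
    obtain ⟨hr, h1, h2⟩ := hp
    lift r to ℕ using hr
    simp only [Int.toNat_natCast] at *
    rintro ⟨⟨i, hi⟩, hk⟩
    have hir : i ≤ r := by
      by_contra h
      have := hm r i (by omega)
      omega
    have := hl i r hir
    refine ⟨((i : ℤ), (sh.mu i : ℤ)), ⟨?_, ?_, ?_⟩, r - i, ?_⟩
    · simp only [SkewShape.cells, skewCells, Set.mem_ofPred_eq, Int.toNat_natCast]
      omega
    · simp only [SkewShape.cells, skewCells, Set.mem_ofPred_eq]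
      rintro ⟨h0, h3, h4⟩
      obtain ⟨i', rfl⟩ : ∃ i', i = i' + 1 := ⟨i - 1, by omega⟩
      have e : ((i' + 1 : ℕ) : ℤ) - 1 = (i' : ℕ) := by push_cast; ring
      rw [e, Int.toNat_natCast] at h3
      have := hm i' (i' + 1) (by omega)
      exact hk ⟨i', by omega⟩
    · simp only [SkewShape.cells, skewCells, Set.mem_ofPred_eq, Int.toNat_natCast]
      omega
    · ext <;> simp only <;> omega

/-- A diagonal of content `k = j − i` that meets `λ/μ` is an inside diagonal exactly when
the path of `μ` turns from a horizontal step (position `k − 1`) to a vertical one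
(position `k`). -/
lemma inside_iff (sh : SkewShape) (p : ℤ × ℤ) (hp : p ∈ sh.cells) :
    (∃ q : ℤ × ℤ, InsideCorner sh q ∧ ∃ n : ℕ, p = (q.1 + n, q.2 + n)) ↔
      ¬ vertStep sh.mu (p.2 - p.1 - 1) ∧ vertStep sh.mu (p.2 - p.1) := by
  have hl := sh.lam_part.1
  have hm := sh.mu_part.1
  constructor
  · rintro ⟨⟨i, j⟩, ⟨h1, h2, h3, h4⟩, n, rfl⟩
    simp only [SkewShape.cells, skewCells, Set.mem_ofPred_eq] at h1 h2 h3 h4 ⊢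
    obtain ⟨i', rfl⟩ : ∃ i' : ℕ, i = i' + 1 := ⟨(i - 1).toNat, by omega⟩
    have e : ((i' : ℤ) + 1) - 1 = (i' : ℕ) := by ring
    have e' : ((i' : ℤ) + 1).toNat = i' + 1 := by omega
    rw [e'] at h1 h3
    rw [e, Int.toNat_natCast] at h2 h4
    have := hl i' (i' + 1) (by omega)
    have hj : j = sh.mu i' := by omega
    refine ⟨?_, ⟨i', by omega⟩⟩
    rintro ⟨m, hmeq⟩
    rcases Nat.lt_or_ge i' m with h | h
    · have := hm (i' + 1) m h
      omega
    · have := hm m i' h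
      omega
  · obtain ⟨r, c⟩ := p
    simp only [SkewShape.cells, skewCells, Set.mem_ofPred_eq] at hp
    obtain ⟨hr, h1, h2⟩ := hp
    lift r to ℕ using hr
    simp only [Int.toNat_natCast] at *
    rintro ⟨hk, ⟨m, hmk⟩⟩
    have hmr : m + 1 ≤ r := by
      by_contra h
      have := hm r m (by omega)
      omega
    have := hl (m + 1) r hmr
    have := hl m (m + 1) (by omega)
    have := hm m (m + 1) (by omega)
    -- Equality here would make the step at position `k - 1` vertical, through row `m + 1`.
    have hlt : sh.mu (m + 1) < sh.mu m := by
      by_contra h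
      exact hk ⟨m + 1, by omega⟩
    have e : ((m : ℤ) + 1) - 1 = (m : ℕ) := by ring
    have e' : ((m : ℤ) + 1).toNat = m + 1 := by omega
    refine ⟨((m : ℤ) + 1, (sh.mu m : ℤ)), ⟨?_, ?_, ?_, ?_⟩, r - (m + 1), ?_⟩
    · simp only [SkewShape.cells, skewCells, Set.mem_ofPred_eq, e']
      omega
    · simp only [SkewShape.cells, skewCells, Set.mem_ofPred_eq, e, Int.toNat_natCast]
      omega
    · simp only [SkewShape.cells, skewCells, Set.mem_ofPred_eq, e']
      omega
    · simp only [SkewShape.cells, skewCells, Set.mem_ofPred_eq, e, Int.toNat_natCast]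
      omega
    · ext <;> simp only <;> omega

/-! ### Counting squares row by row -/

/-- Row `i` of `λ/μ` consists of one square for each content `k` with
`μ_i − i − 1 < k ≤ λ_i − i − 1`. -/
lemma ncard_cells_content (sh : SkewShape) (n : ℕ) (hn : ∀ i, n ≤ i → sh.lam i = 0)
    (P : ℤ → Prop) [DecidablePred P] :
    {p : ℤ × ℤ | p ∈ sh.cells ∧ P (p.2 - p.1)}.ncard =
      ∑ i : Fin n, ((Finset.Ioc ((sh.mu i : ℤ) - (i : ℕ) - 1)
        ((sh.lam i : ℤ) - (i : ℕ) - 1)).filter P).card := by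
  rw [← Finset.card_sigma, ← Set.ncard_coe_finset]
  symm
  refine Set.ncard_congr (fun x _ => (((x.1 : ℕ) : ℤ), x.2 + ((x.1 : ℕ) : ℤ))) ?_ ?_ ?_
  · rintro ⟨i, k⟩ h
    simp only [Finset.coe_sigma, Set.mem_sigma_iff, Finset.mem_coe, Finset.mem_univ,
      Finset.mem_filter, Finset.mem_Ioc, true_and] at h
    obtain ⟨h, hP⟩ := h
    refine ⟨?_, by simpa using hP⟩
    simp only [SkewShape.cells, skewCells, Set.mem_ofPred_eq, Int.toNat_natCast]
    omega
  · rintro ⟨i, k⟩ ⟨i', k'⟩ _ _ h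
    simp only [Prod.mk.injEq, Nat.cast_inj] at h
    obtain ⟨h1, h2⟩ := h
    obtain rfl := Fin.ext h1
    obtain rfl : k = k' := by omega
    rfl
  · rintro ⟨r, c⟩ ⟨h, hP⟩
    simp only [SkewShape.cells, skewCells, Set.mem_ofPred_eq] at h
    obtain ⟨hr, h1, h2⟩ := h
    lift r to ℕ using hr
    simp only [Int.toNat_natCast] at *
    have hrn : r < n := by
      by_contra hc
      have := hn r (by omega)
      omega
    refine ⟨⟨⟨r, hrn⟩, c - r⟩, ?_, by simp⟩
    simp only [Finset.coe_sigma, Set.mem_sigma_iff, Finset.mem_coe, Finset.mem_univ,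
      Finset.mem_filter, Finset.mem_Ioc, true_and]
    exact ⟨by omega, hP⟩

open Classical in
/-- On an integer interval `(b, a]` starting at a point of `V`, the exits from `V` outnumber
the entries into `V` by one if `a ∉ V`, and are equally many if `a ∈ V`. -/
lemma card_exits (V : ℤ → Prop) (b a : ℤ) (hab : b ≤ a) (hb : V b) :
    ((Finset.Ioc b a).filter fun k => V (k - 1) ∧ ¬ V k).card =
      ((Finset.Ioc b a).filter fun k => ¬ V (k - 1) ∧ V k).card + if V a then 0 else 1 := by
  induction a, hab using Int.leInduction with
  | base => simp [hb]
  | succ a hab ih =>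
    have e : Finset.Ioc b (a + 1) = insert (a + 1) (Finset.Ioc b a) := by
      ext x
      simp only [Finset.mem_Ioc, Finset.mem_insert]
      omega
    rw [e, Finset.filter_insert, Finset.filter_insert, add_sub_cancel_right]
    by_cases h1 : V a <;> by_cases h2 : V (a + 1) <;> simp_all

/-- `rank(λ/μ) = jrank(λ/μ)`: the rank equals the number of rows of
the Jacobi–Trudi matrix `JT_{λ/μ}` containing no entry equal to `1`.  (The `(i,j)`
entry of `JT_{λ/μ}` is `h_{λ_i − μ_j − i + j}`, and such an entry equals `1` exactly
when the exponent `λ_i − μ_j − i + j` is `0`.) -/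
theorem rank_eq_jrank (sh : SkewShape) (n : ℕ) (hn : ∀ i, n ≤ i → sh.lam i = 0) :
    sh.rank = (Finset.univ.filter fun i : Fin n =>
      ∀ j : Fin n,
        (sh.lam i : ℤ) - (sh.mu j : ℤ) - ((i : ℕ) : ℤ) + ((j : ℕ) : ℤ) ≠ 0).card := by
  classical
  have key : sh.dplus = sh.dminus + (Finset.univ.filter fun i : Fin n =>
      ∀ j : Fin n,
        (sh.lam i : ℤ) - (sh.mu j : ℤ) - ((i : ℕ) : ℤ) + ((j : ℕ) : ℤ) ≠ 0).card := by
    have hp := (congrArg Set.ncard (Set.ext fun p =>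
      and_congr_right fun h => outside_iff sh p h) : sh.dplus = _).trans
        (ncard_cells_content sh n hn fun k => vertStep sh.mu (k - 1) ∧ ¬ vertStep sh.mu k)
    have hq := (congrArg Set.ncard (Set.ext fun p =>
      and_congr_right fun h => inside_iff sh p h) : sh.dminus = _).trans
        (ncard_cells_content sh n hn fun k => ¬ vertStep sh.mu (k - 1) ∧ vertStep sh.mu k)
    rw [SkewShape.dplus, SkewShape.dminus, hp, hq, Finset.card_filter,
      ← Finset.sum_add_distrib]
    refine Finset.sum_congr rfl fun i _ => ?_
    rw [card_exits (vertStep sh.mu) _ _ (by have := sh.mu_le i; omega) ⟨i, rfl⟩]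
    congr 1
    rw [← ite_not]
    refine if_congr ?_ rfl rfl
    constructor
    · intro h j hj
      exact h ⟨j, by omega⟩
    · rintro h ⟨m, hm⟩
      -- For `m ≥ n` we have `μ_m = 0`, and `λ_i - i = -m` would force `i ≥ n`.
      have hmn : m < n := by
        by_contra hc
        have := hn m (by omega)
        have := sh.mu_le m
        have := i.isLt
        omega
      exact h ⟨m, hmn⟩ (by simp only; omega)
  rw [SkewShape.rank, key, Nat.add_sub_cancel_left]

end

end SkewBorder
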